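/- Let L be a modular ortholattice and a ∈ L. Then the set S = [0,a] ∪ [a',1] is a sub-ortholattice of L (closed under ∧, ∨, ', and containing 0,1), and the map x ↦ x ∧ a is a surjective ortholattice homomorphism from S onto the modular ortholattice [0,a] with relative orthocomplementation y ↦ y' ∧ a: it preserves meets and joins, sends 0 to 0 and 1 to a, and sends x' to ((x ∧ a)' ∧ a) for all x ∈ S. -/

import Mathlib

/-- An ortholattice: a bounded lattice with an order-reversing involution `x ↦ x′`
satisfying `x ⊓ x′ = ⊥` and `x ⊔ x′ = ⊤`. -/
class Ortholattice (α : Type*) extends Lattice α, BoundedOrder α where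
  compl : α → α
  compl_antitone : ∀ x y : α, x ≤ y → compl y ≤ compl x
  compl_compl : ∀ x : α, compl (compl x) = x
  inf_compl : ∀ x : α, x ⊓ compl x = ⊥
  sup_compl : ∀ x : α, x ⊔ compl x = ⊤

postfix:max "′" => Ortholattice.compl

/-- Let `L` be a modular ortholattice and `a ∈ L`.  Then `S = [⊥,a] ∪ [a′,⊤]` is a
sub-ortholattice of `L`, and `x ↦ x ⊓ a` is a surjective ortholattice homomorphism from `S`
onto the interval `[⊥,a]` with relative orthocomplementation `y ↦ y′ ⊓ a`: it preserves
meets and joins, sends `⊥` to `⊥` and `⊤` to `a`, and sends `x′` to `(x ⊓ a)′ ⊓ a`. -/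
theorem stmt4 {α : Type*} [Ortholattice α] [IsModularLattice α] (a : α)
    (S : Set α) (hS : S = {x | x ≤ a} ∪ {x | a′ ≤ x}) :
    -- S is a sub-ortholattice: contains ⊥, ⊤ and is closed under ⊓, ⊔, ′
    (⊥ : α) ∈ S ∧ (⊤ : α) ∈ S ∧
    (∀ x ∈ S, ∀ y ∈ S, x ⊓ y ∈ S ∧ x ⊔ y ∈ S) ∧
    (∀ x ∈ S, x′ ∈ S) ∧
    -- x ↦ x ⊓ a maps S into [⊥, a] and is surjective onto [⊥, a]
    (∀ x ∈ S, x ⊓ a ≤ a) ∧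
    (∀ y : α, y ≤ a → ∃ x ∈ S, x ⊓ a = y) ∧
    -- it preserves meets and joins
    (∀ x ∈ S, ∀ y ∈ S, (x ⊓ y) ⊓ a = (x ⊓ a) ⊓ (y ⊓ a) ∧ (x ⊔ y) ⊓ a = (x ⊓ a) ⊔ (y ⊓ a)) ∧
    -- it sends ⊥ to ⊥ and ⊤ to a
    ((⊥ : α) ⊓ a = ⊥) ∧ ((⊤ : α) ⊓ a = a) ∧
    -- it sends x′ to the relative orthocomplement of x ⊓ a in [⊥, a]
    (∀ x ∈ S, x′ ⊓ a = (x ⊓ a)′ ⊓ a) := by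
  subst hS
  have ca := @Ortholattice.compl_antitone α _
  have cc := @Ortholattice.compl_compl α _
  have ic : a′ ⊓ a = ⊥ := by rw [inf_comm]; exact Ortholattice.inf_compl a
  have sc : a′ ⊔ a = ⊤ := by rw [sup_comm]; exact Ortholattice.sup_compl a
  have dm : ∀ x y : α, (x ⊓ y)′ = x′ ⊔ y′ := by
    intro x y
    apply le_antisymm
    · have h : (x′ ⊔ y′)′ ≤ x ⊓ y := by
        apply le_inf
        · have := ca _ _ (le_sup_left : x′ ≤ x′ ⊔ y′)
          rwa [cc] at this
        · have := ca _ _ (le_sup_right : y′ ≤ x′ ⊔ y′)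
          rwa [cc] at this
      have := ca _ _ h
      rwa [cc] at this
    · exact sup_le (ca _ _ inf_le_left) (ca _ _ inf_le_right)
  have m1 : ∀ x y : α, x ≤ a → (x ⊔ y) ⊓ a = x ⊔ y ⊓ a := fun x y h =>
    (sup_inf_assoc_of_le y h)
  have dec : ∀ x : α, a′ ≤ x → x = a′ ⊔ x ⊓ a := by
    intro x h
    have := sup_inf_assoc_of_le a h
    rw [sc, top_inf_eq, inf_comm] at this
    exact this
  refine ⟨Or.inl bot_le, Or.inr le_top, ?_, ?_, fun x _ => inf_le_right,
    fun y hy => ⟨y, Or.inl hy, inf_eq_left.2 hy⟩, ?_, bot_inf_eq a, top_inf_eq a, ?_⟩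
  · rintro x (hx | hx) y (hy | hy)
    · exact ⟨Or.inl (inf_le_left.trans hx), Or.inl (sup_le hx hy)⟩
    · exact ⟨Or.inl (inf_le_left.trans hx), Or.inr (le_trans hy le_sup_right)⟩
    · exact ⟨Or.inl (inf_le_right.trans hy), Or.inr (le_trans hx le_sup_left)⟩
    · exact ⟨Or.inr (le_inf hx hy), Or.inr (le_trans hx le_sup_left)⟩
  · rintro x (hx | hx)
    · exact Or.inr (ca _ _ hx)
    · left
      have := ca _ _ hx
      rw [cc] at this
      exact this
  · intro x hx y hy
    refine ⟨inf_inf_distrib_right x y a, ?_⟩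
    rcases hx with hx | hx
    · rw [m1 x y hx, inf_eq_left.2 hx]
    · rcases hy with hy | hy
      · rw [sup_comm, m1 y x hy, inf_eq_left.2 hy, sup_comm]
      · have e : x ⊔ y = (x ⊓ a ⊔ y ⊓ a) ⊔ a′ := by
          conv_lhs => rw [dec x hx, dec y hy]
          rw [← sup_sup_distrib_left, sup_comm]
        rw [e, m1 _ _ (sup_le inf_le_right inf_le_right), ic, sup_bot_eq]
  · rintro x (hx | hx)
    · rw [inf_eq_left.2 hx]
    · have h := ca _ _ hx
      rw [cc] at h
      rw [dm, m1 _ _ h, ic, sup_bot_eq, inf_eq_left.2 h]
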